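/- Let n ∈ ℕ and let Z_1, …, Z_n ∈ L^1, and define the risk profiles g_i(p) = ES_p(Z_i) for p ∈ [0,1] and i = 1, …, n. Then for every X ∈ L^1, the inf-convolution satisfies (□_{i=1}^n ES^{g_i})(X) = ES^{g_1+⋯+g_n}(X); that is, the inf-convolution of benchmark-adjusted Expected Shortfalls is itself an adjusted Expected Shortfall with risk profile equal to the sum of the individual profiles. -/

import Mathlib

open MeasureTheory Set Filter

variable {Ω : Type*} [MeasurableSpace Ω]

/-- An atomless probability space: every set of positive measure has a subset of
strictly smaller positive measure. -/
def Atomless (μ : Measure Ω) : Prop :=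
  ∀ A : Set Ω, MeasurableSet A → 0 < μ A →
    ∃ B : Set Ω, MeasurableSet B ∧ B ⊆ A ∧ 0 < μ B ∧ μ B < μ A

/-- Value at Risk at level `p`: the left `p`-quantile for `p ∈ (0,1]`, the essential
infimum for `p = 0`.  Values are extended reals. -/
noncomputable def VaR (μ : Measure Ω) (X : Ω → ℝ) (p : ℝ) : EReal :=
  if p = 0 then essInf (fun ω => (X ω : EReal)) μ
  else sInf ((fun x : ℝ => (x : EReal)) '' {x : ℝ | ENNReal.ofReal p ≤ μ {ω | X ω ≤ x}})

/-- Real-valued version of the left `p`-quantile, used as the integrand of ES. -/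
noncomputable def VaRr (μ : Measure Ω) (X : Ω → ℝ) (p : ℝ) : ℝ :=
  sInf {x : ℝ | ENNReal.ofReal p ≤ μ {ω | X ω ≤ x}}

/-- Expected Shortfall at level `p`: `(1/(1-p)) ∫_p^1 VaR_q(X) dq` for `p ∈ [0,1)`,
the essential supremum for `p = 1`. -/
noncomputable def ES (μ : Measure Ω) (X : Ω → ℝ) (p : ℝ) : EReal :=
  if p = 1 then essSup (fun ω => (X ω : EReal)) μ
  else (((1 - p)⁻¹ * ∫ q in Set.Ioo p 1, VaRr μ X q : ℝ) : EReal)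

/-- The `g`-adjusted Expected Shortfall, `sup_{p ∈ [0,1]} (ES_p(X) - g(p))`.
Note that in `EReal` one has `⊤ - ⊤ = ⊥`, matching the convention `∞ - ∞ = -∞`. -/
noncomputable def adjES (μ : Measure Ω) (g : ℝ → EReal) (X : Ω → ℝ) : EReal :=
  ⨆ p ∈ Set.Icc (0:ℝ) 1, (ES μ X p - g p)

/-- The class `𝒢` of risk profiles: increasing functions `[0,1] → (-∞,∞]` that are
not identically `∞`. -/
def IsRiskProfile (g : ℝ → EReal) : Prop :=
  MonotoneOn g (Set.Icc (0:ℝ) 1) ∧ (∀ p ∈ Set.Icc (0:ℝ) 1, g p ≠ ⊥) ∧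
    ∃ p ∈ Set.Icc (0:ℝ) 1, g p ≠ ⊤

/-- Second-order stochastic dominance: `SSD μ X Y` means `X ≥_SSD Y`, i.e. every
risk-averse agent prefers `X` to `Y` (positive values are losses). -/
def SSD (μ : Measure Ω) (X Y : Ω → ℝ) : Prop :=
  ∀ u : ℝ → ℝ, Monotone u → ConcaveOn ℝ Set.univ u →
    ∫ ω, u (-(Y ω)) ∂μ ≤ ∫ ω, u (-(X ω)) ∂μ

/-- The inf-convolution of the functionals `ρ_1, …, ρ_n`. -/
noncomputable def infConv (μ : Measure Ω) {n : ℕ} (ρ : Fin n → ((Ω → ℝ) → EReal))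
    (X : Ω → ℝ) : EReal :=
  ⨅ (Y : Fin n → Ω → ℝ) (_ : (∀ i, Integrable (Y i) μ) ∧ ∀ ω, (∑ i, Y i ω) = X ω),
    ∑ i, ρ i (Y i)

/-- The class `𝒢_VaR`: risk profiles finite on `[0,1)`, left-continuous on `[0,1]`
and right-continuous at `0`. -/
def GVaRProfile (g : ℝ → EReal) : Prop :=
  IsRiskProfile g ∧ (∀ p ∈ Set.Ico (0:ℝ) 1, g p ≠ ⊤) ∧
    (∀ p ∈ Set.Ioc (0:ℝ) 1, Filter.Tendsto g (nhdsWithin p (Set.Ico 0 p)) (nhds (g p))) ∧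
    Filter.Tendsto g (nhdsWithin 0 (Set.Ioc 0 1)) (nhds (g 0))

/-- The class `𝒢_ES`: profiles in `𝒢_VaR` such that `h_g(p) = (1-p)g(p)` is concave
on `(0,1)` and left-continuous at `1` (with `h_g(1) = 0` by the convention `0·∞ = 0`). -/
def GESProfile (g : ℝ → EReal) : Prop :=
  GVaRProfile g ∧ ConcaveOn ℝ (Set.Ioo (0:ℝ) 1) (fun p => (1 - p) * (g p).toReal) ∧
    Filter.Tendsto (fun p => (1 - p) * (g p).toReal) (nhdsWithin 1 (Set.Ico (0:ℝ) 1)) (nhds 0)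

/-!
Put `h_i(p) = (1 - p) g_i(p)`, a concave function vanishing at `1`, and
`T_X(p) = (1 - p) ES_p(X)`. By the Rockafellar–Uryasev formula `T_X` is a minimum over `x` of affine
functions of `p`, hence concave, and `X ↦ T_X` is subadditive; this gives the inequality `≥`.

For `≤`, after adding a constant to the profiles, one has to split `X` with `T_X ≤ ∑ h_i` into
`X = ∑ Y_i` with `T_{Y_i} ≤ h_i`. Concave functions have a Riesz decomposition property: if
`u`, `h`, `v` are concave and `u ≤ h + v`, then the least concave majorant `w` of `u - v` satisfies
`w ≤ h` and `u - w ≤ v`, and `u - w` is concave, because `w` is locally affine where it exceeds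
`u - v`, and elsewhere `v` touches `u - w` from above. For `u = T_X` the derivatives of `-w` and of
`w - u` are increasing and sum to the quantile function of `X`, so they are the quantile functions
of `f(X)` and `X - f(X)` for some `f` with `f` and `id - f` increasing. Hence `T_{f(X)} = w`, and
one summand after another can be split off.
-/

open ProbabilityTheory
open scoped Topology

section ConcaveFunctions

lemma nonneg_of_frequently_midpoint_le {a b : ℝ} {e : ℝ → ℝ} (he : ContinuousOn e (Icc a b))
    (ha : 0 ≤ e a) (hb : 0 ≤ e b)
    (hmid : ∀ z ∈ Ioo a b, ∃ᶠ t in 𝓝[>] 0, e (z - t) + e (z + t) ≤ 2 * e z)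
    {y : ℝ} (hy : y ∈ Icc a b) : 0 ≤ e y := by
  by_contra! hneg
  obtain ⟨m, hm, hmin⟩ := isCompact_Icc.exists_isMinOn ⟨y, hy⟩ he
  -- Strictness to the left of the leftmost minimiser is what contradicts `hmid`.
  obtain ⟨z, ⟨hz, hzm⟩, hleast⟩ : ∃ z, IsLeast (Icc a b ∩ e ⁻¹' {e m}) z :=
    (isCompact_Icc.of_isClosed_subset
      (he.preimage_isClosed_of_isClosed isClosed_Icc isClosed_singleton)
      inter_subset_left).exists_isLeast ⟨m, hm, rfl⟩
  have hz_le : ∀ x ∈ Icc a b, e z ≤ e x := fun x hx => hzm.trans_le (hmin hx)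
  have hz_neg : e z < 0 := (hz_le y hy).trans_lt hneg
  have haz : a < z := hz.1.lt_of_ne (by rintro rfl; exact hz_neg.not_ge ha)
  have hzb : z < b := hz.2.lt_of_ne (by rintro rfl; exact hz_neg.not_ge hb)
  obtain ⟨t, hle, ht, htz⟩ := ((hmid z ⟨haz, hzb⟩).and_eventually
    (Ioo_mem_nhdsGT (lt_min (sub_pos.2 haz) (sub_pos.2 hzb)))).exists
  rw [lt_min_iff] at htz
  have hleft : z - t ∈ Icc a b := ⟨by linarith, by linarith⟩
  have hlt : e z < e (z - t) := (hz_le _ hleft).lt_of_ne fun heq => by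
    linarith [hleast ⟨hleft, heq.symm.trans hzm⟩]
  linarith [hz_le (z + t) ⟨by linarith, by linarith⟩]

lemma concaveOn_of_frequently_midpoint_le {s : Set ℝ} {f : ℝ → ℝ} (hs : Convex ℝ s)
    (hf : ContinuousOn f s)
    (hmid : ∀ z ∈ interior s, ∃ᶠ t in 𝓝[>] 0, f (z - t) + f (z + t) ≤ 2 * f z) :
    ConcaveOn ℝ s f := by
  refine LinearOrder.concaveOn_of_lt hs fun x hx y hy hxy a b ha hb hab => ?_
  have hsub : Icc x y ⊆ s := hs.ordConnected.out hx hy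
  have hchord : slope f x y * (y - x) = f y - f x := by
    rw [mul_comm, ← smul_eq_mul, sub_smul_slope, vsub_eq_sub]
  have key := nonneg_of_frequently_midpoint_le (e := fun t => f t - (f x + slope f x y * (t - x)))
    ((hf.mono hsub).sub (by fun_prop)) (by simp) (by simp [hchord]) (fun z hz => by
      refine (hmid z (interior_mono hsub (by rwa [interior_Icc]))).mono fun t ht => ?_
      linarith) (y := a • x + b • y)
    (convex_Icc x y (left_mem_Icc.2 hxy.le) (right_mem_Icc.2 hxy.le) ha.le hb.le hab)
  obtain rfl : a = 1 - b := by linarith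
  simp only [smul_eq_mul] at key ⊢
  linear_combination key - b * hchord

lemma le_chord_of_notMem_Icc {s : Set ℝ} {f : ℝ → ℝ} (hf : ConcaveOn ℝ s f) {a b y : ℝ} (ha : a ∈ s)
    (hb : b ∈ s) (hy : y ∈ s) (hab : a < b) (hyab : y ∉ Icc a b) :
    f y ≤ f a + slope f a b * (y - a) := by
  have hya : y ≠ a := by rintro rfl; exact hyab (left_mem_Icc.2 hab.le)
  have hfy : f y = f a + slope f a y * (y - a) := by
    rw [slope_def_field, div_mul_cancel₀ _ (sub_ne_zero.2 hya)]; ring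
  rw [hfy, add_le_add_iff_left]
  rcases lt_or_gt_of_ne hya with hlt | hgt
  · exact mul_le_mul_of_nonpos_right
      (hf.slope_anti ha ⟨hy, hya⟩ ⟨hb, hab.ne'⟩ (hlt.trans hab).le) (sub_nonpos.2 hlt.le)
  · have hby : b ≤ y := by
      by_contra! h
      exact hyab ⟨hgt.le, h.le⟩
    exact mul_le_mul_of_nonneg_right
      (hf.slope_anti ha ⟨hb, hab.ne'⟩ ⟨hy, hya⟩ hby) (sub_nonneg.2 hgt.le)

section Envelope

variable {E : Type*} [AddCommGroup E] [Module ℝ E] {s : Set E} {f φ : E → ℝ}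

/-- The least concave majorant of `f` on `s`. Its values are meaningful only at points of `s`, and
only if `f` has some concave majorant on `s`. -/
noncomputable def concaveEnvelope (s : Set E) (f : E → ℝ) (x : E) : ℝ :=
  ⨅ φ : {φ : E → ℝ // ConcaveOn ℝ s φ ∧ ∀ y ∈ s, f y ≤ φ y}, φ.1 x

lemma concaveEnvelope_le (hφ : ConcaveOn ℝ s φ) (hfφ : ∀ y ∈ s, f y ≤ φ y) {x : E} (hx : x ∈ s) :
    concaveEnvelope s f x ≤ φ x :=
  ciInf_le (f := fun φ : {φ : E → ℝ // ConcaveOn ℝ s φ ∧ ∀ y ∈ s, f y ≤ φ y} => φ.1 x)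
    ⟨f x, forall_mem_range.2 fun ψ => ψ.2.2 x hx⟩ ⟨φ, hφ, hfφ⟩

lemma le_concaveEnvelope (hφ : ConcaveOn ℝ s φ) (hfφ : ∀ y ∈ s, f y ≤ φ y) {x : E} (hx : x ∈ s) :
    f x ≤ concaveEnvelope s f x :=
  have : Nonempty {φ : E → ℝ // ConcaveOn ℝ s φ ∧ ∀ y ∈ s, f y ≤ φ y} := ⟨⟨φ, hφ, hfφ⟩⟩
  le_ciInf fun ψ => ψ.2.2 x hx

lemma concaveOn_concaveEnvelope (hφ : ConcaveOn ℝ s φ) (hfφ : ∀ y ∈ s, f y ≤ φ y) :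
    ConcaveOn ℝ s (concaveEnvelope s f) := by
  have : Nonempty {φ : E → ℝ // ConcaveOn ℝ s φ ∧ ∀ y ∈ s, f y ≤ φ y} := ⟨⟨φ, hφ, hfφ⟩⟩
  refine ⟨hφ.1, fun x hx y hy a b ha hb hab => le_ciInf fun ψ => ?_⟩
  refine le_trans ?_ (ψ.2.1.2 hx hy ha hb hab)
  gcongr <;> exact concaveEnvelope_le ψ.2.1 ψ.2.2 ‹_›

end Envelope

variable {s : Set ℝ} {f φ u v h : ℝ → ℝ}

lemma two_mul_concaveEnvelope_le (hφ : ConcaveOn ℝ s φ) (hfφ : ∀ y ∈ s, f y ≤ φ y)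
    {z t c : ℝ} (ht : 0 < t) (hl : z - t ∈ s) (hr : z + t ∈ s)
    (hf : ∀ y ∈ Icc (z - t) (z + t), f y ≤ c) (hcl : c ≤ concaveEnvelope s f (z - t))
    (hcr : c ≤ concaveEnvelope s f (z + t)) :
    2 * concaveEnvelope s f z ≤ concaveEnvelope s f (z - t) + concaveEnvelope s f (z + t) := by
  set w := concaveEnvelope s f
  have hw : ConcaveOn ℝ s w := concaveOn_concaveEnvelope hφ hfφ
  have hz : z ∈ s := hφ.1.ordConnected.out hl hr ⟨by linarith, by linarith⟩
  let chord : ℝ → ℝ := fun y => w (z - t) + slope w (z - t) (z + t) * (y - (z - t))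
  have hslope : slope w (z - t) (z + t) * (2 * t) = w (z + t) - w (z - t) := by
    rw [slope_def_field, show z + t - (z - t) = 2 * t by ring, div_mul_cancel₀ _ (by linarith)]
  have hchord : ConcaveOn ℝ s chord := ⟨hφ.1, fun x _ y _ a b _ _ hab => le_of_eq <| by
    obtain rfl : a = 1 - b := by linarith
    simp only [chord, smul_eq_mul]; ring⟩
  -- Cutting `w` by its chord keeps it above `f`: outside `[z - t, z + t]` the chord dominates `w`,
  -- inside it dominates `c`. Minimality of `w` then puts `w z` below the chord.
  have hle_chord : ∀ y ∈ s, f y ≤ chord y := fun y hy => by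
    by_cases hmem : y ∈ Icc (z - t) (z + t)
    · refine (hf y hmem).trans ?_
      have h₁ := mul_le_mul_of_nonneg_right hcl (sub_nonneg.2 hmem.2)
      have h₂ := mul_le_mul_of_nonneg_right hcr (sub_nonneg.2 hmem.1)
      refine le_of_mul_le_mul_left ?_ (show 0 < 2 * t by linarith)
      linear_combination h₁ + h₂ - (y - (z - t)) * hslope
    · exact (le_concaveEnvelope hφ hfφ hy).trans
        (le_chord_of_notMem_Icc hw hl hr hy (by linarith) hmem)
  have hwz : w z ≤ chord z := (concaveEnvelope_le (hw.inf hchord)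
    (fun y hy => le_inf (le_concaveEnvelope hφ hfφ hy) (hle_chord y hy)) hz).trans inf_le_right
  linear_combination 2 * hwz + hslope

lemma eventually_two_mul_concaveEnvelope_le (hs : IsOpen s) (hf : ContinuousOn f s)
    (hφ : ConcaveOn ℝ s φ) (hfφ : ∀ y ∈ s, f y ≤ φ y) {z : ℝ} (hz : z ∈ s)
    (hlt : f z < concaveEnvelope s f z) :
    ∀ᶠ t in 𝓝[>] 0, 2 * concaveEnvelope s f z ≤
      concaveEnvelope s f (z - t) + concaveEnvelope s f (z + t) := by
  have hw := (concaveOn_concaveEnvelope hφ hfφ).continuousOn hs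
  obtain ⟨c, hfc, hcw⟩ := exists_between hlt
  have hnear : ∀ᶠ y in 𝓝 z, f y < c ∧ c < concaveEnvelope s f y ∧ y ∈ s :=
    ((hf.continuousAt (hs.mem_nhds hz)).eventually_lt_const hfc).and
      (((hw.continuousAt (hs.mem_nhds hz)).eventually_const_lt hcw).and (hs.mem_nhds hz))
  obtain ⟨δ, hδ, hball⟩ := Metric.eventually_nhds_iff.1 hnear
  filter_upwards [Ioo_mem_nhdsGT hδ] with t ht
  have hIcc : ∀ y ∈ Icc (z - t) (z + t), f y < c ∧ c < concaveEnvelope s f y ∧ y ∈ s :=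
    fun y hy => hball <| by
      rw [Real.dist_eq, abs_lt]
      exact ⟨by linarith [hy.1, ht.2], by linarith [hy.2, ht.2]⟩
  obtain ⟨-, hcl, hl⟩ := hIcc (z - t) ⟨le_rfl, by linarith [ht.1]⟩
  obtain ⟨-, hcr, hr⟩ := hIcc (z + t) ⟨by linarith [ht.1], le_rfl⟩
  exact two_mul_concaveEnvelope_le hφ hfφ ht.1 hl hr (fun y hy => (hIcc y hy).1.le) hcl.le hcr.le

lemma eventually_sub_mem_and_add_mem (hs : IsOpen s) {z : ℝ} (hz : z ∈ s) :
    ∀ᶠ t in 𝓝[>] 0, z - t ∈ s ∧ z + t ∈ s := by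
  have hl : ∀ᶠ t in 𝓝 (0 : ℝ), z - t ∈ s :=
    (continuous_const.sub continuous_id).continuousAt.preimage_mem_nhds
      (by simpa using hs.mem_nhds hz)
  have hr : ∀ᶠ t in 𝓝 (0 : ℝ), z + t ∈ s :=
    (continuous_const.add continuous_id).continuousAt.preimage_mem_nhds
      (by simpa using hs.mem_nhds hz)
  exact (hl.and hr).filter_mono nhdsWithin_le_nhds

lemma eventually_midpoint_le (hs : IsOpen s) (hf : ConcaveOn ℝ s f) {z : ℝ} (hz : z ∈ s) :
    ∀ᶠ t in 𝓝[>] 0, f (z - t) + f (z + t) ≤ 2 * f z := by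
  filter_upwards [eventually_sub_mem_and_add_mem hs hz] with t ⟨hlt, hrt⟩
  have hmid := hf.2 hlt hrt (by norm_num : (0 : ℝ) ≤ 1 / 2) (by norm_num : (0 : ℝ) ≤ 1 / 2)
    (by norm_num)
  simp only [smul_eq_mul] at hmid
  rw [show 1 / 2 * (z - t) + 1 / 2 * (z + t) = z by ring] at hmid
  linarith

theorem exists_concaveOn_decomposition (hs : IsOpen s) (hu : ConcaveOn ℝ s u)
    (hv : ConcaveOn ℝ s v) (hh : ConcaveOn ℝ s h) (hle : ∀ p ∈ s, u p ≤ h p + v p) :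
    ∃ w : ℝ → ℝ, ConcaveOn ℝ s w ∧ ConcaveOn ℝ s (u - w) ∧
      ∀ p ∈ s, w p ≤ h p ∧ u p - w p ≤ v p := by
  have hmaj : ∀ p ∈ s, (u - v) p ≤ h p := fun p hp => sub_le_iff_le_add.2 (hle p hp)
  set w := concaveEnvelope s (u - v)
  have hw : ConcaveOn ℝ s w := concaveOn_concaveEnvelope hh hmaj
  have hwv : ∀ p ∈ s, u p - w p ≤ v p := fun p hp =>
    sub_le_comm.1 (le_concaveEnvelope hh hmaj hp)
  have huv : ContinuousOn (u - v) s := (hu.continuousOn hs).sub (hv.continuousOn hs)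
  refine ⟨w, hw, concaveOn_of_frequently_midpoint_le hu.1
    ((hu.continuousOn hs).sub (hw.continuousOn hs)) fun z hz => Eventually.frequently ?_,
    fun p hp => ⟨concaveEnvelope_le hh hmaj hp, hwv p hp⟩⟩
  rw [hs.interior_eq] at hz
  rcases (le_concaveEnvelope hh hmaj hz).lt_or_eq with hlt | heq
  · filter_upwards [eventually_midpoint_le hs hu hz,
      eventually_two_mul_concaveEnvelope_le hs huv hh hmaj hz hlt] with t hut hwt
    simp only [Pi.sub_apply]
    linarith
  · -- Here `v` touches `u - w` from above, so `u - w` inherits the midpoint inequality of `v`.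
    have hvz : u z - w z = v z := by
      have : u z - v z = w z := heq
      linarith
    filter_upwards [eventually_midpoint_le hs hv hz, eventually_sub_mem_and_add_mem hs hz]
      with t hvt ⟨hl, hr⟩
    simp only [Pi.sub_apply]
    linarith [hwv _ hl, hwv _ hr]

lemma concaveOn_finset_sum {E ι : Type*} [AddCommGroup E] [Module ℝ E] {s : Set E}
    (hs : Convex ℝ s) {t : Finset ι} {f : ι → E → ℝ} (hf : ∀ i ∈ t, ConcaveOn ℝ s (f i)) :
    ConcaveOn ℝ s fun x => ∑ i ∈ t, f i x := by
  refine ⟨hs, fun x hx y hy a b ha hb hab => ?_⟩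
  simp only [Finset.smul_sum, ← Finset.sum_add_distrib]
  exact Finset.sum_le_sum fun i hi => (hf i hi).2 hx hy ha hb hab

lemma integral_rightDeriv_eq_sub {a b L : ℝ} {φ : ℝ → ℝ} (hφ : ConvexOn ℝ (Ioo a b) φ)
    (hlim : Tendsto φ (𝓝[<] b) (𝓝 L)) {p : ℝ} (hp : p ∈ Ioo a b)
    (hint : IntervalIntegrable (fun q => derivWithin φ (Ioi q) q) volume p b) :
    ∫ q in p..b, derivWithin φ (Ioi q) q = L - φ p := by
  have hIco : Ico p b ⊆ Ioo a b := Ico_subset_Ioo_left hp.1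
  have hcont : ContinuousOn (Function.update φ b L) (Icc p b) := by
    rw [continuousOn_update_iff, Icc_sdiff_right, nhdsWithin_Ico_eq_nhdsLT hp.2]
    exact ⟨(hφ.continuousOn isOpen_Ioo).mono hIco, fun _ => hlim⟩
  have hderiv : ∀ x ∈ Ioo p b,
      HasDerivWithinAt (Function.update φ b L) (derivWithin φ (Ioi x) x) (Ioi x) x := by
    intro x hx
    have hxI : x ∈ interior (Ioo a b) := by
      rw [interior_Ioo]
      exact hIco (Ioo_subset_Ico_self hx)
    refine (hφ.hasDerivWithinAt_rightDeriv_of_mem_interior hxI).congr_of_eventuallyEq ?_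
      (Function.update_of_ne hx.2.ne _ _)
    filter_upwards [nhdsWithin_le_nhds (Iio_mem_nhds hx.2)] with y hy
    exact Function.update_of_ne hy.out.ne _ _
  rw [intervalIntegral.integral_eq_sub_of_hasDeriv_right_of_le hp.2.le hcont hderiv hint,
    Function.update_self, Function.update_of_ne hp.2.ne]

end ConcaveFunctions

section Comonotone

lemma exists_lipschitzWith_comp_eq {α : Type*} {s : Set α} {d e : α → ℝ}
    (h : ∀ a ∈ s, ∀ b ∈ s, |d a - d b| ≤ |e a - e b|) :
    ∃ G : ℝ → ℝ, LipschitzWith 1 G ∧ ∀ a ∈ s, G (e a) = d a := by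
  rcases s.eq_empty_or_nonempty with rfl | ⟨a₀, -⟩
  · exact ⟨id, LipschitzWith.id, by simp⟩
  have : Nonempty α := ⟨a₀⟩
  let σ := Function.invFunOn e s
  have hσ : ∀ y ∈ e '' s, σ y ∈ s ∧ e (σ y) = y := fun y hy =>
    ⟨Function.invFunOn_mem hy, Function.invFunOn_eq hy⟩
  have hlip : LipschitzOnWith 1 (d ∘ σ) (e '' s) :=
    LipschitzOnWith.of_dist_le_mul fun x hx y hy => by
      simpa [Real.dist_eq, (hσ x hx).2, (hσ y hy).2] using h _ (hσ x hx).1 _ (hσ y hy).1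
  obtain ⟨G, hG, hGeq⟩ := hlip.extend_real
  refine ⟨G, hG, fun a ha => (hGeq (mem_image_of_mem e ha)).symm.trans ?_⟩
  have hea := hσ _ (mem_image_of_mem e ha)
  have := h _ hea.1 a ha
  rw [hea.2, sub_self, abs_zero] at this
  exact sub_eq_zero.1 (abs_nonpos_iff.1 this)

lemma exists_monotone_comp_eq {α : Type*} [LinearOrder α] {s : Set α} {k l : α → ℝ}
    (hk : MonotoneOn k s) (hl : MonotoneOn l s) :
    ∃ f : ℝ → ℝ, Monotone f ∧ Monotone (fun y => y - f y) ∧ ∀ a ∈ s, f (k a + l a) = k a := by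
  have hdiff : ∀ a ∈ s, ∀ b ∈ s, |(k a - l a) - (k b - l b)| ≤ |(k a + l a) - (k b + l b)| := by
    intro a ha b hb
    wlog hab : a ≤ b generalizing a b
    · rw [abs_sub_comm, abs_sub_comm (k a + l a)]
      exact this b hb a ha (le_of_not_ge hab)
    have := hk ha hb hab
    have := hl ha hb hab
    rw [abs_sub_comm (k a + l a), abs_of_nonneg (by linarith : 0 ≤ k b + l b - (k a + l a)), abs_le]
    constructor <;> linarith
  obtain ⟨G, hG, hGeq⟩ := exists_lipschitzWith_comp_eq hdiff
  have hG' : ∀ {x y}, x ≤ y → |G y - G x| ≤ y - x := fun {x y} hxy => by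
    simpa [Real.dist_eq, abs_of_nonneg (sub_nonneg.2 hxy)] using hG.dist_le_mul y x
  refine ⟨fun y => (y + G y) / 2, fun x y hxy => ?_, fun x y hxy => ?_, fun a ha => ?_⟩
  · linarith [neg_le_of_abs_le (hG' hxy)]
  · linarith [le_of_abs_le (hG' hxy)]
  · simp only [hGeq a ha]; ring

lemma lipschitzWith_one_of_monotone_sub {f : ℝ → ℝ} (hf : Monotone f)
    (hsub : Monotone fun y => y - f y) : LipschitzWith 1 f :=
  LipschitzWith.of_le_add fun x y => by
    rcases le_total x y with hxy | hyx
    · exact (hf hxy).trans (le_add_of_nonneg_right dist_nonneg)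
    · have : y - f y ≤ x - f x := hsub hyx
      rw [Real.dist_eq, abs_of_nonneg (sub_nonneg.2 hyx)]
      linarith

lemma integrable_comp_of_lipschitzWith {α E F : Type*} [MeasurableSpace α] {μ : Measure α}
    [IsFiniteMeasure μ] [NormedAddCommGroup E] [NormedAddCommGroup F] {K : NNReal} {f : E → F}
    {W : α → E} (hf : LipschitzWith K f) (hW : Integrable W μ) :
    Integrable (fun a => f (W a)) μ := by
  refine Integrable.mono' ((integrable_const ‖f 0‖).add (hW.norm.const_mul (K : ℝ)))
    (hf.continuous.comp_aestronglyMeasurable hW.aestronglyMeasurable) (ae_of_all _ fun a => ?_)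
  have := hf.norm_sub_le (W a) 0
  rw [sub_zero] at this
  exact (norm_le_norm_add_norm_sub' (f (W a)) (f 0)).trans (by simpa using this)

end Comonotone

section ExtendedReals

variable {ι : Type*} {s : Finset ι} {f : ι → EReal}

lemma ereal_coe_finset_sum (s : Finset ι) (f : ι → ℝ) :
    ((∑ i ∈ s, f i : ℝ) : EReal) = ∑ i ∈ s, (f i : EReal) :=
  map_sum (⟨⟨Real.toEReal, EReal.coe_zero⟩, EReal.coe_add⟩ : ℝ →+ EReal) f s

lemma ereal_sum_eq_top (hbot : ∀ i ∈ s, f i ≠ ⊥) (htop : ∃ i ∈ s, f i = ⊤) :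
    ∑ i ∈ s, f i = ⊤ := by
  classical
  obtain ⟨i, hi, htop⟩ := htop
  have hrest : ∑ j ∈ s.erase i, f j ≠ ⊥ :=
    Finset.sum_induction f (· ≠ ⊥) (fun _ _ ha hb => EReal.add_ne_bot_iff.2 ⟨ha, hb⟩)
      EReal.zero_ne_bot fun j hj => hbot j (Finset.mem_of_mem_erase hj)
  rw [← Finset.add_sum_erase s f hi, htop, EReal.top_add_of_ne_bot hrest]

lemma ereal_sum_eq_coe_sum_toReal (hbot : ∀ i ∈ s, f i ≠ ⊥) (htop : ∀ i ∈ s, f i ≠ ⊤) :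
    ∑ i ∈ s, f i = (∑ i ∈ s, (f i).toReal : ℝ) := by
  rw [ereal_coe_finset_sum]
  exact Finset.sum_congr rfl fun i hi => (EReal.coe_toReal (htop i hi) (hbot i hi)).symm

end ExtendedReals

section Quantile

variable {μ : Measure Ω} [IsProbabilityMeasure μ] {X : Ω → ℝ} {p q x : ℝ}

lemma ofReal_le_measure_iff_le_cdf (hX : AEMeasurable X μ) :
    ENNReal.ofReal q ≤ μ {ω | X ω ≤ x} ↔ q ≤ cdf (μ.map X) x := by
  have := Measure.isProbabilityMeasure_map hX
  have hset : μ {ω | X ω ≤ x} = μ.map X (Iic x) :=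
    (Measure.map_apply_of_aemeasurable hX measurableSet_Iic).symm
  rw [hset, ← ofReal_cdf, ENNReal.ofReal_le_ofReal_iff (cdf_nonneg _ _)]

lemma VaRr_le_iff_le_cdf (hX : AEMeasurable X μ) (hq : q ∈ Ioo (0 : ℝ) 1) :
    VaRr μ X q ≤ x ↔ q ≤ cdf (μ.map X) x := by
  simp only [VaRr, ofReal_le_measure_iff_le_cdf hX]
  set F := cdf (μ.map X)
  have hne : {y | q ≤ F y}.Nonempty :=
    (((tendsto_cdf_atTop _).eventually_const_lt hq.2).mono fun _ => le_of_lt).exists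
  have hbdd : BddBelow {y | q ≤ F y} := by
    obtain ⟨y, hy⟩ := ((tendsto_cdf_atBot (μ.map X)).eventually_lt_const hq.1).exists
    exact ⟨y, fun z hz => (F.mono.reflect_lt (hy.trans_le hz)).le⟩
  have hmem : q ≤ F (sInf {y | q ≤ F y}) := by
    refine ge_of_tendsto ((F.right_continuous _).mono Ioi_subset_Ici_self) ?_
    filter_upwards [self_mem_nhdsWithin] with y hy
    obtain ⟨z, hz, hzy⟩ := exists_lt_of_csInf_lt hne hy
    exact hz.out.trans (F.mono hzy.le)
  exact ⟨fun h => hmem.trans (F.mono h), fun h => csInf_le hbdd h⟩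

lemma VaRr_le_iff (hX : AEMeasurable X μ) (hq : q ∈ Ioo (0 : ℝ) 1) :
    VaRr μ X q ≤ x ↔ ENNReal.ofReal q ≤ μ {ω | X ω ≤ x} := by
  rw [VaRr_le_iff_le_cdf hX hq, ofReal_le_measure_iff_le_cdf hX]

lemma monotoneOn_VaRr (hX : AEMeasurable X μ) : MonotoneOn (VaRr μ X) (Ioo 0 1) :=
  fun _ hp _ hq hpq => (VaRr_le_iff_le_cdf hX hp).2
    (hpq.trans ((VaRr_le_iff_le_cdf hX hq).1 le_rfl))

lemma identDistrib_VaRr (hX : AEMeasurable X μ) :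
    IdentDistrib (VaRr μ X) X (volume.restrict (Ioo 0 1)) μ := by
  have hV : AEMeasurable (VaRr μ X) (volume.restrict (Ioo 0 1)) :=
    aemeasurable_restrict_of_monotoneOn measurableSet_Ioo (monotoneOn_VaRr hX)
  refine ⟨hV, hX, ?_⟩
  have := Measure.isProbabilityMeasure_map hX
  have : IsProbabilityMeasure (volume.restrict (Ioo (0 : ℝ) 1)) := ⟨by simp⟩
  have := Measure.isProbabilityMeasure_map hV
  refine Measure.ext_of_Iic _ _ fun x => ?_
  have hpre : VaRr μ X ⁻¹' Iic x ∩ Ioo 0 1 = Ioc 0 (cdf (μ.map X) x) \ {1} := by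
    ext q
    constructor
    · rintro ⟨hqx, hq⟩
      exact ⟨⟨hq.1, (VaRr_le_iff_le_cdf hX hq).1 hqx⟩, hq.2.ne⟩
    · rintro ⟨hq, hq1⟩
      have hq' : q ∈ Ioo (0 : ℝ) 1 := ⟨hq.1, (hq.2.trans (cdf_le_one _ _)).lt_of_ne hq1⟩
      exact ⟨(VaRr_le_iff_le_cdf hX hq').2 hq.2, hq'⟩
  rw [Measure.map_apply_of_aemeasurable hV measurableSet_Iic,
    Measure.restrict_apply' measurableSet_Ioo, hpre, measure_sdiff_null (measure_singleton _),
    Real.volume_Ioc, sub_zero, ofReal_cdf]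

lemma VaRr_comp {f : ℝ → ℝ} (hX : AEMeasurable X μ) (hf : Monotone f) (hq : q ∈ Ioo (0 : ℝ) 1)
    (hfc : ContinuousWithinAt f (Iio (VaRr μ X q)) (VaRr μ X q)) :
    VaRr μ (fun ω => f (X ω)) q = f (VaRr μ X q) := by
  have hfX : AEMeasurable (fun ω => f (X ω)) μ := hf.measurable.comp_aemeasurable hX
  refine eq_of_forall_ge_iff fun y => ?_
  constructor
  · intro hy
    -- Below its quantile `X` has less than mass `q`, whereas `f (X ω) ≤ y` has mass at least `q`.
    refine le_of_tendsto hfc ?_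
    filter_upwards [self_mem_nhdsWithin] with x hx
    obtain ⟨ω, hω, hxω⟩ : ∃ ω, f (X ω) ≤ y ∧ x < X ω := by
      by_contra! hsub
      exact (not_le.2 hx) ((VaRr_le_iff hX hq).2 (((VaRr_le_iff hfX hq).1 hy).trans
        (measure_mono hsub)))
    exact (hf hxω.le).trans hω
  · intro hy
    exact (VaRr_le_iff hfX hq).2 (((VaRr_le_iff hX hq).1 le_rfl).trans
      (measure_mono fun ω hω => (hf hω).trans hy))

end Quantile

section TailIntegral

/-- The unnormalised Expected Shortfall `(1 - p) * ES_p(X)`, which is concave and continuous in `p`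
and vanishes at `p = 1`, even where `ES_1(X) = ∞`. -/
noncomputable def tailIntegral (μ : Measure Ω) (X : Ω → ℝ) (p : ℝ) : ℝ :=
  ∫ q in p..1, VaRr μ X q

lemma ES_of_lt_one {μ : Measure Ω} {X : Ω → ℝ} {p : ℝ} (hp : p < 1) :
    ES μ X p = ((1 - p)⁻¹ * tailIntegral μ X p : ℝ) := by
  rw [ES, if_neg hp.ne, tailIntegral, intervalIntegral.integral_of_le hp.le,
    integral_Ioc_eq_integral_Ioo]

variable {μ : Measure Ω} [IsProbabilityMeasure μ] {X : Ω → ℝ} {p x : ℝ}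

lemma intervalIntegrable_VaRr (hX : Integrable X μ) {a b : ℝ} (ha : a ∈ Icc (0 : ℝ) 1)
    (hb : b ∈ Icc (0 : ℝ) 1) : IntervalIntegrable (VaRr μ X) volume a b := by
  rw [← uIcc_of_le zero_le_one] at ha hb
  exact ((intervalIntegrable_iff_integrableOn_Ioo_of_le zero_le_one).2
    ((identDistrib_VaRr hX.aemeasurable).integrable_iff.2 hX)).mono_set (uIcc_subset_uIcc ha hb)

lemma intervalIntegrable_max_VaRr_sub (hX : Integrable X μ) (x : ℝ) {a b : ℝ}
    (ha : a ∈ Icc (0 : ℝ) 1) (hb : b ∈ Icc (0 : ℝ) 1) :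
    IntervalIntegrable (fun q => max (VaRr μ X q - x) 0) volume a b :=
  have h := (intervalIntegrable_VaRr hX ha hb).sub intervalIntegrable_const
  ⟨h.1.pos_part, h.2.pos_part⟩

lemma integral_max_VaRr_sub (hX : Integrable X μ) (x : ℝ) :
    ∫ q in 0..1, max (VaRr μ X q - x) 0 = ∫ ω, max (X ω - x) 0 ∂μ := by
  rw [intervalIntegral.integral_of_le zero_le_one, integral_Ioc_eq_integral_Ioo]
  exact ((identDistrib_VaRr hX.aemeasurable).comp
    (show Measurable fun y : ℝ => max (y - x) 0 by fun_prop)).integral_eq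

lemma tailIntegral_eq_add_integral_sub (hX : Integrable X μ) (hp : p ∈ Icc (0 : ℝ) 1) (x : ℝ) :
    tailIntegral μ X p = (1 - p) * x + ∫ q in p..1, (VaRr μ X q - x) := by
  rw [intervalIntegral.integral_sub
    (intervalIntegrable_VaRr hX hp (right_mem_Icc.2 zero_le_one)) intervalIntegrable_const,
    intervalIntegral.integral_const, smul_eq_mul, add_sub_cancel, tailIntegral]

-- The next two lemmas are the Rockafellar–Uryasev formula: `tailIntegral μ X p` is the minimum over
-- `x` of `(1 - p) * x + E[(X - x)⁺]`, attained at the `p`-quantile.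
lemma tailIntegral_le (hX : Integrable X μ) (hp : p ∈ Icc (0 : ℝ) 1) (x : ℝ) :
    tailIntegral μ X p ≤ (1 - p) * x + ∫ ω, max (X ω - x) 0 ∂μ := by
  have h0 : (0 : ℝ) ∈ Icc (0 : ℝ) 1 := left_mem_Icc.2 zero_le_one
  have h1 : (1 : ℝ) ∈ Icc (0 : ℝ) 1 := right_mem_Icc.2 zero_le_one
  rw [tailIntegral_eq_add_integral_sub hX hp x, add_le_add_iff_left]
  calc ∫ q in p..1, (VaRr μ X q - x)
      ≤ ∫ q in p..1, max (VaRr μ X q - x) 0 :=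
        intervalIntegral.integral_mono_on hp.2
          ((intervalIntegrable_VaRr hX hp h1).sub intervalIntegrable_const)
          (intervalIntegrable_max_VaRr_sub hX x hp h1) fun _ _ => le_max_left _ _
    _ ≤ ∫ q in 0..1, max (VaRr μ X q - x) 0 :=
        intervalIntegral.integral_mono_interval hp.1 hp.2 le_rfl
          (ae_of_all _ fun _ => le_max_right _ _) (intervalIntegrable_max_VaRr_sub hX x h0 h1)
    _ = ∫ ω, max (X ω - x) 0 ∂μ := integral_max_VaRr_sub hX x

lemma tailIntegral_eq (hX : Integrable X μ) (hp : p ∈ Ioo (0 : ℝ) 1) :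
    tailIntegral μ X p = (1 - p) * VaRr μ X p + ∫ ω, max (X ω - VaRr μ X p) 0 ∂μ := by
  have hp' := Ioo_subset_Icc_self hp
  have hmono := monotoneOn_VaRr hX.aemeasurable
  have hbelow : ∫ q in 0..p, max (VaRr μ X q - VaRr μ X p) 0 = ∫ _ in 0..p, 0 :=
    intervalIntegral.integral_congr_Ioo_of_le hp.1.le fun q hq =>
      max_eq_right (sub_nonpos.2 (hmono ⟨hq.1, hq.2.trans hp.2⟩ hp hq.2.le))
  have habove : ∫ q in p..1, max (VaRr μ X q - VaRr μ X p) 0 =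
      ∫ q in p..1, (VaRr μ X q - VaRr μ X p) :=
    intervalIntegral.integral_congr_Ioo_of_le hp.2.le fun q hq =>
      max_eq_left (sub_nonneg.2 (hmono hp ⟨hp.1.trans hq.1, hq.2⟩ hq.1.le))
  rw [tailIntegral_eq_add_integral_sub hX hp', ← integral_max_VaRr_sub hX,
    ← intervalIntegral.integral_add_adjacent_intervals
      (intervalIntegrable_max_VaRr_sub hX _ (left_mem_Icc.2 zero_le_one) hp')
      (intervalIntegrable_max_VaRr_sub hX _ hp' (right_mem_Icc.2 zero_le_one)),
    hbelow, habove, intervalIntegral.integral_zero, zero_add]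

lemma concaveOn_tailIntegral (hX : Integrable X μ) : ConcaveOn ℝ (Ioo 0 1) (tailIntegral μ X) := by
  refine ⟨convex_Ioo 0 1, fun p hp q hq a b ha hb hab => ?_⟩
  set r := a • p + b • q with hr
  set x := VaRr μ X r
  rw [tailIntegral_eq hX (convex_Ioo 0 1 hp hq ha hb hab)]
  calc a • tailIntegral μ X p + b • tailIntegral μ X q
      ≤ a • ((1 - p) * x + ∫ ω, max (X ω - x) 0 ∂μ)
          + b • ((1 - q) * x + ∫ ω, max (X ω - x) 0 ∂μ) := by
        gcongr <;> exact tailIntegral_le hX (Ioo_subset_Icc_self ‹_›) x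
    _ = (1 - r) * x + ∫ ω, max (X ω - x) 0 ∂μ := by
        simp only [hr, smul_eq_mul]
        linear_combination (x + ∫ ω, max (X ω - x) 0 ∂μ) * hab

lemma continuousOn_tailIntegral (hX : Integrable X μ) :
    ContinuousOn (tailIntegral μ X) (Icc 0 1) := by
  have h := intervalIntegral.continuousOn_primitive_interval'
    (intervalIntegrable_VaRr hX (left_mem_Icc.2 zero_le_one) (right_mem_Icc.2 zero_le_one))
    right_mem_uIcc
  rw [uIcc_of_le zero_le_one] at h
  exact h.neg.congr fun p _ => intervalIntegral.integral_symm 1 p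

lemma tendsto_tailIntegral_one (hX : Integrable X μ) :
    Tendsto (tailIntegral μ X) (𝓝[<] 1) (𝓝 0) := by
  have h := (continuousOn_tailIntegral hX 1 (right_mem_Icc.2 zero_le_one)).mono Ioo_subset_Icc_self
  rwa [ContinuousWithinAt, nhdsWithin_Ioo_eq_nhdsLT zero_lt_one, tailIntegral,
    intervalIntegral.integral_same] at h

lemma ae_hasDerivAt_tailIntegral (hX : Integrable X μ) :
    ∀ᵐ p, p ∈ Ioo (0 : ℝ) 1 → HasDerivAt (tailIntegral μ X) (-VaRr μ X p) p := by
  filter_upwards [(intervalIntegrable_VaRr hX (left_mem_Icc.2 zero_le_one)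
    (right_mem_Icc.2 zero_le_one)).ae_hasDerivAt_integral] with p hderiv hp
  refine (hderiv ?_ 1 right_mem_uIcc).neg.congr_of_eventuallyEq
    (Eventually.of_forall fun p => intervalIntegral.integral_symm 1 p)
  rw [uIcc_of_le zero_le_one]
  exact Ioo_subset_Icc_self hp

lemma tailIntegral_sum_le {ι : Type*} {s : Finset ι} {Y : ι → Ω → ℝ}
    (hY : ∀ i ∈ s, Integrable (Y i) μ) (hp : p ∈ Icc (0 : ℝ) 1) :
    tailIntegral μ (fun ω => ∑ i ∈ s, Y i ω) p ≤ ∑ i ∈ s, tailIntegral μ (Y i) p := by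
  have hsum : Integrable (fun ω => ∑ i ∈ s, Y i ω) μ := integrable_finsetSum s hY
  have hpos : ∀ i ∈ s, ∀ x, Integrable (fun ω => max (Y i ω - x) 0) μ := fun i hi x =>
    ((hY i hi).sub (integrable_const x)).pos_part
  have hIoo : ∀ p ∈ Ioo (0 : ℝ) 1,
      tailIntegral μ (fun ω => ∑ i ∈ s, Y i ω) p ≤ ∑ i ∈ s, tailIntegral μ (Y i) p := by
    intro p hp
    refine (tailIntegral_le hsum (Ioo_subset_Icc_self hp) (∑ i ∈ s, VaRr μ (Y i) p)).trans ?_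
    rw [Finset.sum_congr rfl fun i hi => tailIntegral_eq (hY i hi) hp, Finset.sum_add_distrib,
      Finset.mul_sum, add_le_add_iff_left, ← integral_finsetSum s fun i hi => hpos i hi _]
    refine integral_mono (hsum.sub (integrable_const _)).pos_part
      (integrable_finsetSum s fun i hi => hpos i hi _) fun ω => ?_
    refine max_le ?_ (Finset.sum_nonneg fun i _ => le_max_right _ _)
    simp only [← Finset.sum_sub_distrib]
    exact Finset.sum_le_sum fun i _ => le_max_left _ _
  have hclosure : closure (Ioo (0 : ℝ) 1) = Icc 0 1 := closure_Ioo zero_ne_one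
  refine le_on_closure hIoo ?_ ?_ (hclosure ▸ hp) <;> rw [hclosure]
  exacts [continuousOn_tailIntegral hsum,
    continuousOn_finsetSum s fun i hi => continuousOn_tailIntegral (hY i hi)]

lemma tailIntegral_sub_comp {f : ℝ → ℝ} (hX : Integrable X μ) (hf : Monotone f)
    (hsub : Monotone fun y => y - f y) (hp : p ∈ Icc (0 : ℝ) 1) :
    tailIntegral μ (fun ω => X ω - f (X ω)) p =
      tailIntegral μ X p - tailIntegral μ (fun ω => f (X ω)) p := by
  have hlip := lipschitzWith_one_of_monotone_sub hf hsub
  have h1 : (1 : ℝ) ∈ Icc (0 : ℝ) 1 := right_mem_Icc.2 zero_le_one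
  rw [tailIntegral, tailIntegral, tailIntegral, ← intervalIntegral.integral_sub
    (intervalIntegrable_VaRr hX hp h1)
    (intervalIntegrable_VaRr (integrable_comp_of_lipschitzWith hlip hX) hp h1)]
  refine intervalIntegral.integral_congr_Ioo_of_le hp.2 fun q hq => ?_
  have hq' : q ∈ Ioo (0 : ℝ) 1 := ⟨hp.1.trans_lt hq.1, hq.2⟩
  simp only [VaRr_comp hX.aemeasurable hf hq' hlip.continuous.continuousWithinAt]
  exact VaRr_comp hX.aemeasurable hsub hq'
    (continuous_id.sub hlip.continuous).continuousWithinAt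

end TailIntegral

section Allocation

variable {μ : Measure Ω} [IsProbabilityMeasure μ] {W : Ω → ℝ}

lemma ae_rightDeriv_add_rightDeriv_eq_VaRr {w : ℝ → ℝ} (hW : Integrable W μ)
    (hw : ConcaveOn ℝ (Ioo 0 1) w) (hsub : ConcaveOn ℝ (Ioo 0 1) (tailIntegral μ W - w)) :
    ∀ᵐ p, p ∈ Ioo (0 : ℝ) 1 → derivWithin (-w) (Ioi p) p +
      derivWithin (-(tailIntegral μ W - w)) (Ioi p) p = VaRr μ W p := by
  filter_upwards [ae_hasDerivAt_tailIntegral hW] with p hderiv hp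
  have hint : p ∈ interior (Ioo (0 : ℝ) 1) := by rwa [interior_Ioo]
  have hadd := (hw.neg.hasDerivWithinAt_rightDeriv_of_mem_interior hint).add
    (hsub.neg.hasDerivWithinAt_rightDeriv_of_mem_interior hint)
  rw [show -w + -(tailIntegral μ W - w) = -tailIntegral μ W by abel] at hadd
  exact ((uniqueDiffWithinAt_Ioi p).eq_deriv _ hadd (hderiv hp).neg.hasDerivWithinAt).trans
    (neg_neg _)

lemma exists_monotone_tailIntegral_comp_eq {w : ℝ → ℝ} (hW : Integrable W μ)
    (hw : ConcaveOn ℝ (Ioo 0 1) w) (hsub : ConcaveOn ℝ (Ioo 0 1) (tailIntegral μ W - w))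
    (hlim : Tendsto w (𝓝[<] 1) (𝓝 0)) :
    ∃ f : ℝ → ℝ, Monotone f ∧ Monotone (fun y => y - f y) ∧
      ∀ p ∈ Ioo (0 : ℝ) 1, tailIntegral μ (fun ω => f (W ω)) p = w p := by
  -- The derivatives of `-w` and of `w - tailIntegral μ W` are increasing and add up to the quantile
  -- function, so `k` is a function of that quantile.
  set k : ℝ → ℝ := fun p => derivWithin (-w) (Ioi p) p
  set l : ℝ → ℝ := fun p => derivWithin (-(tailIntegral μ W - w)) (Ioi p) p
  have hk : MonotoneOn k (Ioo 0 1) := by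
    simpa only [interior_Ioo] using hw.neg.monotoneOn_rightDeriv
  have hl : MonotoneOn l (Ioo 0 1) := by
    simpa only [interior_Ioo] using hsub.neg.monotoneOn_rightDeriv
  obtain ⟨f, hf, hfsub, hfk⟩ := exists_monotone_comp_eq hk hl
  have hlip := lipschitzWith_one_of_monotone_sub hf hfsub
  have hVaRr : ∀ᵐ q, q ∈ Ioo (0 : ℝ) 1 → VaRr μ (fun ω => f (W ω)) q = k q := by
    filter_upwards [ae_rightDeriv_add_rightDeriv_eq_VaRr hW hw hsub] with q hq hqI
    rw [VaRr_comp hW.aemeasurable hf hqI hlip.continuous.continuousWithinAt, ← hq hqI, hfk q hqI]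
  refine ⟨f, hf, hfsub, fun p hp => ?_⟩
  have hae : ∀ᵐ q, q ∈ uIoc p 1 → VaRr μ (fun ω => f (W ω)) q = k q := by
    filter_upwards [hVaRr, Measure.ae_ne volume 1] with q hq hq1 hqI
    rw [uIoc_of_le hp.2.le] at hqI
    exact hq ⟨hp.1.trans hqI.1, hqI.2.lt_of_ne hq1⟩
  have hint : IntervalIntegrable k volume p 1 :=
    (intervalIntegrable_VaRr (integrable_comp_of_lipschitzWith hlip hW) (Ioo_subset_Icc_self hp)
      (right_mem_Icc.2 zero_le_one)).congr_ae ((ae_restrict_iff' measurableSet_uIoc).2 hae)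
  rw [tailIntegral, intervalIntegral.integral_congr_ae hae,
    integral_rightDeriv_eq_sub hw.neg hlim.neg hp hint]
  simp

lemma exists_tailIntegral_le_and_sub_le {h v : ℝ → ℝ} (hW : Integrable W μ)
    (hh : ConcaveOn ℝ (Ioo 0 1) h) (hv : ConcaveOn ℝ (Ioo 0 1) v)
    (hhlim : Tendsto h (𝓝[<] 1) (𝓝 0)) (hvlim : Tendsto v (𝓝[<] 1) (𝓝 0))
    (hle : ∀ p ∈ Ioo (0 : ℝ) 1, tailIntegral μ W p ≤ h p + v p) :
    ∃ Y : Ω → ℝ, Integrable Y μ ∧ ∀ p ∈ Ioo (0 : ℝ) 1,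
      tailIntegral μ Y p ≤ h p ∧ tailIntegral μ (fun ω => W ω - Y ω) p ≤ v p := by
  obtain ⟨w, hw, hsub, hbd⟩ :=
    exists_concaveOn_decomposition isOpen_Ioo (concaveOn_tailIntegral hW) hv hh hle
  have hwlim : Tendsto w (𝓝[<] 1) (𝓝 0) := by
    have hlow : Tendsto (fun p => tailIntegral μ W p - v p) (𝓝[<] 1) (𝓝 0) := by
      simpa using (tendsto_tailIntegral_one hW).sub hvlim
    refine tendsto_of_tendsto_of_tendsto_of_le_of_le' hlow hhlim ?_ ?_ <;>
      filter_upwards [Ioo_mem_nhdsLT zero_lt_one] with p hp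
    exacts [sub_le_comm.1 (hbd p hp).2, (hbd p hp).1]
  obtain ⟨f, hf, hfsub, hfw⟩ := exists_monotone_tailIntegral_comp_eq hW hw hsub hwlim
  refine ⟨fun ω => f (W ω),
    integrable_comp_of_lipschitzWith (lipschitzWith_one_of_monotone_sub hf hfsub) hW,
    fun p hp => ?_⟩
  rw [tailIntegral_sub_comp hW hf hfsub (Ioo_subset_Icc_self hp), hfw p hp]
  exact hbd p hp

theorem exists_allocation {n : ℕ} (hn : 0 < n) {h : Fin n → ℝ → ℝ}
    (hh : ∀ i, ConcaveOn ℝ (Ioo 0 1) (h i)) (hlim : ∀ i, Tendsto (h i) (𝓝[<] 1) (𝓝 0))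
    (hW : Integrable W μ) (hle : ∀ p ∈ Ioo (0 : ℝ) 1, tailIntegral μ W p ≤ ∑ i, h i p) :
    ∃ Y : Fin n → Ω → ℝ, (∀ i, Integrable (Y i) μ) ∧ (∀ ω, ∑ i, Y i ω = W ω) ∧
      ∀ i, ∀ p ∈ Ioo (0 : ℝ) 1, tailIntegral μ (Y i) p ≤ h i p := by
  induction n, hn using Nat.le_induction generalizing W with
  | base => exact ⟨fun _ => W, fun _ => hW, by simp, by simpa using hle⟩
  | succ n _ ih =>
    have hrest : Tendsto (fun p => ∑ i : Fin n, h i.succ p) (𝓝[<] 1) (𝓝 0) := by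
      simpa using tendsto_finsetSum Finset.univ fun (i : Fin n) _ => hlim i.succ
    obtain ⟨Y₀, hY₀, hY₀le⟩ := exists_tailIntegral_le_and_sub_le hW (hh 0)
      (concaveOn_finset_sum (convex_Ioo 0 1) fun i _ => hh (Fin.succ i)) (hlim 0) hrest
      (by simpa only [Fin.sum_univ_succ] using hle)
    obtain ⟨Y, hY, hYsum, hYle⟩ := ih (fun i => hh i.succ) (fun i => hlim i.succ) (hW.sub hY₀)
      fun p hp => (hY₀le p hp).2
    refine ⟨Fin.cons Y₀ Y, Fin.cases hY₀ hY, fun ω => ?_, Fin.cases (fun p hp => ?_) hYle⟩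
    · simp [Fin.sum_univ_succ, hYsum]
    · exact (hY₀le p hp).1

end Allocation

section ExpectedShortfall

variable {μ : Measure Ω} {X : Ω → ℝ} {p : ℝ}

lemma ES_le_coe_iff (hp : p < 1) {a : ℝ} : ES μ X p ≤ a ↔ tailIntegral μ X p ≤ (1 - p) * a := by
  rw [ES_of_lt_one hp, EReal.coe_le_coe_iff, inv_mul_le_iff₀ (sub_pos.2 hp)]

lemma one_sub_mul_toReal_ES (hp : p < 1) : (1 - p) * (ES μ X p).toReal = tailIntegral μ X p := by
  rw [ES_of_lt_one hp, EReal.toReal_coe, mul_inv_cancel_left₀ (sub_pos.2 hp).ne']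

lemma ae_le_ES_one (μ : Measure Ω) (X : Ω → ℝ) : ∀ᵐ ω ∂μ, (X ω : EReal) ≤ ES μ X 1 := by
  rw [ES, if_pos rfl]
  exact ae_le_essSup

lemma ES_one_le_of_ae_le {c : EReal} (h : ∀ᵐ ω ∂μ, (X ω : EReal) ≤ c) : ES μ X 1 ≤ c := by
  rw [ES, if_pos rfl]
  exact essSup_le_of_ae_le c h

variable [IsProbabilityMeasure μ]

lemma VaRr_le_ES (hX : Integrable X μ) (hp : p ∈ Ioo (0 : ℝ) 1) :
    (VaRr μ X p : EReal) ≤ ES μ X p := by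
  rw [ES_of_lt_one hp.2, EReal.coe_le_coe_iff, le_inv_mul_iff₀ (sub_pos.2 hp.2),
    tailIntegral_eq hX hp]
  exact le_add_of_nonneg_right (integral_nonneg fun _ => le_max_right _ _)

lemma ES_le_of_ae_le (hX : Integrable X μ) (hp : p ∈ Ico (0 : ℝ) 1) {c : ℝ}
    (h : ∀ᵐ ω ∂μ, X ω ≤ c) : ES μ X p ≤ c := by
  have hzero : ∫ ω, max (X ω - c) 0 ∂μ = 0 :=
    integral_eq_zero_of_ae (h.mono fun ω hω => max_eq_right (sub_nonpos.2 hω))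
  rw [ES_le_coe_iff hp.2]
  simpa only [hzero, add_zero] using tailIntegral_le hX (Ico_subset_Icc_self hp) c

lemma ES_le_ES_one (hX : Integrable X μ) (hp : p ∈ Ico (0 : ℝ) 1) : ES μ X p ≤ ES μ X 1 := by
  refine EReal.le_of_forall_lt_iff_le.1 fun c hc => ES_le_of_ae_le hX hp ?_
  filter_upwards [ae_le_ES_one μ X] with ω hω
  exact EReal.coe_le_coe_iff.1 (hω.trans hc.le)

lemma ES_one_le (hX : Integrable X μ) {c : EReal} (h : ∀ p ∈ Ioo (0 : ℝ) 1, ES μ X p ≤ c) :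
    ES μ X 1 ≤ c := by
  refine ES_one_le_of_ae_le ((identDistrib_VaRr hX.aemeasurable).ae_snd
    (measurableSet_le measurable_coe_real_ereal measurable_const) ?_)
  filter_upwards [ae_restrict_mem measurableSet_Ioo] with p hp
  exact (VaRr_le_ES hX hp).trans (h p hp)

lemma monotoneOn_ES (hX : Integrable X μ) : MonotoneOn (ES μ X) (Icc 0 1) := by
  intro p hp q hq hpq
  rcases hpq.eq_or_lt with rfl | hlt
  · rfl
  rcases hq.2.eq_or_lt with rfl | hq1
  · exact ES_le_ES_one hX ⟨hp.1, hlt⟩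
  have hRU := tailIntegral_le hX hp (VaRr μ X q)
  have hRUq := tailIntegral_eq hX ⟨hp.1.trans_lt hlt, hq1⟩
  have hpos : 0 ≤ ∫ ω, max (X ω - VaRr μ X q) 0 ∂μ := integral_nonneg fun _ => le_max_right _ _
  rw [ES_of_lt_one hq1, ES_le_coe_iff (hlt.trans hq1), ← mul_assoc, ← div_eq_mul_inv,
    div_mul_eq_mul_div, le_div_iff₀ (sub_pos.2 hq1)]
  rw [hRUq]
  nlinarith

lemma continuousOn_ES (hX : Integrable X μ) : ContinuousOn (ES μ X) (Icc 0 1) := by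
  intro p hp
  rcases hp.2.eq_or_lt with rfl | hp1
  · refine tendsto_order.2 ⟨fun c hc => ?_, fun c hc => ?_⟩
    · obtain ⟨q, hq, hcq⟩ : ∃ q ∈ Ioo (0 : ℝ) 1, c < ES μ X q := by
        by_contra! h
        exact hc.not_ge (ES_one_le hX h)
      filter_upwards [self_mem_nhdsWithin, nhdsWithin_le_nhds (Ioi_mem_nhds hq.2)] with r hr hqr
      exact hcq.trans_le (monotoneOn_ES hX (Ioo_subset_Icc_self hq) hr hqr.out.le)
    · filter_upwards [self_mem_nhdsWithin] with r hr
      exact (monotoneOn_ES hX hr hp hr.2).trans_lt hc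
  · have hcont : ContinuousWithinAt (fun q => (((1 - q)⁻¹ * tailIntegral μ X q : ℝ) : EReal))
        (Icc 0 1) p :=
      continuous_coe_real_ereal.continuousAt.comp_continuousWithinAt
        (((continuousWithinAt_const.sub continuousWithinAt_id).inv₀ (sub_pos.2 hp1).ne').mul
          (continuousOn_tailIntegral hX p hp))
    refine hcont.congr_of_eventuallyEq ?_ (ES_of_lt_one hp1)
    filter_upwards [nhdsWithin_le_nhds (Iio_mem_nhds hp1)] with q hq using ES_of_lt_one hq

lemma ES_sum_le {ι : Type*} {s : Finset ι} {Y : ι → Ω → ℝ} (hY : ∀ i ∈ s, Integrable (Y i) μ)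
    (hp : p ∈ Icc (0 : ℝ) 1) :
    ES μ (fun ω => ∑ i ∈ s, Y i ω) p ≤ ∑ i ∈ s, ES μ (Y i) p := by
  rcases hp.2.eq_or_lt with rfl | hp1
  · refine ES_one_le_of_ae_le ?_
    filter_upwards [(ae_ball_iff s.countable_toSet).2 fun i _ => ae_le_ES_one μ (Y i)] with ω hω
    rw [ereal_coe_finset_sum]
    exact Finset.sum_le_sum hω
  · simp only [ES_of_lt_one hp1, ← ereal_coe_finset_sum, EReal.coe_le_coe_iff, ← Finset.mul_sum]
    exact mul_le_mul_of_nonneg_left (tailIntegral_sum_le hY hp) (inv_nonneg.2 (sub_pos.2 hp1).le)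

theorem gesProfile_ES (hX : Integrable X μ) : GESProfile (ES μ X) := by
  have hmono := monotoneOn_ES hX
  have hcont := continuousOn_ES hX
  have h0 : (0 : ℝ) ∈ Icc (0 : ℝ) 1 := left_mem_Icc.2 zero_le_one
  have hfin : ∀ p < 1, ES μ X p ≠ ⊤ ∧ ES μ X p ≠ ⊥ := fun p hp => by
    simp only [ES_of_lt_one hp, ne_eq, EReal.coe_ne_top, EReal.coe_ne_bot, not_false_eq_true,
      and_self]
  refine ⟨⟨⟨hmono, fun p hp => ?_, 0, h0, (hfin 0 zero_lt_one).1⟩, fun p hp => (hfin p hp.2).1,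
    fun p hp => ?_, (hcont 0 h0).mono Ioc_subset_Icc_self⟩, ?_, ?_⟩
  · exact ne_bot_of_le_ne_bot (hfin 0 zero_lt_one).2 (hmono h0 hp hp.1)
  · exact (hcont p (Ioc_subset_Icc_self hp)).mono fun q hq => ⟨hq.1, hq.2.le.trans hp.2⟩
  · exact (concaveOn_tailIntegral hX).congr fun p hp => (one_sub_mul_toReal_ES hp.2).symm
  · rw [nhdsWithin_Ico_eq_nhdsLT zero_lt_one]
    refine (tendsto_tailIntegral_one hX).congr' ?_
    filter_upwards [self_mem_nhdsWithin] with p hp using (one_sub_mul_toReal_ES hp).symm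

end ExpectedShortfall

namespace GESProfile

variable {g : ℝ → EReal} {p : ℝ}

lemma ne_bot (hg : GESProfile g) (hp : p ∈ Icc (0 : ℝ) 1) : g p ≠ ⊥ := hg.1.1.2.1 p hp

lemma ne_top (hg : GESProfile g) (hp : p ∈ Ico (0 : ℝ) 1) : g p ≠ ⊤ := hg.1.2.1 p hp

lemma concaveOn_const_add (hg : GESProfile g) (c : ℝ) :
    ConcaveOn ℝ (Ioo 0 1) fun p => (1 - p) * (c + (g p).toReal) := by
  have hlin : ConcaveOn ℝ (Ioo 0 1) fun p : ℝ => (1 - p) * c :=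
    ⟨convex_Ioo 0 1, fun p _ q _ a b _ _ hab => by
      simp only [smul_eq_mul]
      exact (by linear_combination c * hab : _ = _).le⟩
  simp only [mul_add]
  exact hlin.add hg.2.1

lemma tendsto_const_add (hg : GESProfile g) (c : ℝ) :
    Tendsto (fun p => (1 - p) * (c + (g p).toReal)) (𝓝[<] 1) (𝓝 0) := by
  have hlin : Tendsto (fun p : ℝ => (1 - p) * c) (𝓝[<] 1) (𝓝 0) :=
    tendsto_nhdsWithin_of_tendsto_nhds (Continuous.tendsto' (by fun_prop) _ _ (by simp))
  have hprofile := hg.2.2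
  rw [nhdsWithin_Ico_eq_nhdsLT zero_lt_one] at hprofile
  simpa only [mul_add, add_zero] using hlin.add hprofile

end GESProfile

section InfConvolution

lemma ES_sub_le_adjES {μ : Measure Ω} {g : ℝ → EReal} {X : Ω → ℝ} {p : ℝ}
    (hp : p ∈ Icc (0 : ℝ) 1) :
    ES μ X p - g p ≤ adjES μ g X :=
  le_iSup₂ (f := fun p (_ : p ∈ Icc (0 : ℝ) 1) => ES μ X p - g p) p hp

variable {μ : Measure Ω} [IsProbabilityMeasure μ]

lemma adjES_sum_le {ι : Type*} {s : Finset ι} {g : ι → ℝ → EReal} {Y : ι → Ω → ℝ}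
    (hg : ∀ i ∈ s, ∀ p ∈ Icc (0 : ℝ) 1, g i p ≠ ⊥) (hY : ∀ i ∈ s, Integrable (Y i) μ) :
    adjES μ (fun p => ∑ i ∈ s, g i p) (fun ω => ∑ i ∈ s, Y i ω) ≤
      ∑ i ∈ s, adjES μ (g i) (Y i) := by
  refine iSup₂_le fun p hp => ?_
  beta_reduce
  by_cases htop : ∃ i ∈ s, g i p = ⊤
  · rw [ereal_sum_eq_top (fun i hi => hg i hi p hp) htop, EReal.sub_top]
    exact bot_le
  push Not at htop
  refine EReal.sub_le_of_le_add ((ES_sum_le hY hp).trans ?_)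
  rw [← Finset.sum_add_distrib]
  refine Finset.sum_le_sum fun i hi => ?_
  rw [← EReal.sub_le_iff_le_add (.inl (hg i hi p hp)) (.inl (htop i hi))]
  exact ES_sub_le_adjES hp

lemma adjES_le_coe {g : ℝ → EReal} {Y : Ω → ℝ} {c : ℝ} (hg : MonotoneOn g (Icc 0 1))
    (hg0 : Tendsto g (𝓝[Ioc 0 1] 0) (𝓝 (g 0))) (hY : Integrable Y μ)
    (h : ∀ p ∈ Ioo (0 : ℝ) 1, ES μ Y p ≤ c + g p) : adjES μ g Y ≤ c := by
  refine iSup₂_le fun p hp => EReal.sub_le_of_le_add ?_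
  rcases hp.1.eq_or_lt with rfl | hp0
  · rw [nhdsWithin_Ioc_eq_nhdsGT zero_lt_one] at hg0
    rw [add_comm, ← EReal.sub_le_iff_le_add (.inl (EReal.coe_ne_bot c)) (.inl (EReal.coe_ne_top c))]
    refine ge_of_tendsto hg0 ?_
    filter_upwards [Ioo_mem_nhdsGT zero_lt_one] with q hq
    refine EReal.sub_le_of_le_add ?_
    rw [add_comm]
    exact (monotoneOn_ES hY hp (Ioo_subset_Icc_self hq) hq.1.le).trans (h q hq)
  rcases hp.2.eq_or_lt with rfl | hp1
  · refine ES_one_le hY fun q hq => (h q hq).trans ?_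
    gcongr
    exact hg (Ioo_subset_Icc_self hq) hp hq.2.le
  · exact h p ⟨hp0, hp1⟩

lemma infConv_adjES_le_coe {n : ℕ} (hn : 0 < n) {g : Fin n → ℝ → EReal}
    (hg : ∀ i, GESProfile (g i)) {X : Ω → ℝ} (hX : Integrable X μ) {a : ℝ}
    (hle : ∀ p ∈ Ioo (0 : ℝ) 1, tailIntegral μ X p ≤ (1 - p) * (a + ∑ i, (g i p).toReal)) :
    infConv μ (fun i => adjES μ (g i)) X ≤ a := by
  have hsum : ∑ _i : Fin n, a / n = a := by
    rw [Finset.sum_const, Finset.card_univ, Fintype.card_fin, nsmul_eq_mul,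
      mul_div_cancel₀ a (Nat.cast_ne_zero.2 hn.ne')]
  obtain ⟨Y, hY, hYsum, hYle⟩ := exists_allocation hn
    (fun i => (hg i).concaveOn_const_add (a / n)) (fun i => (hg i).tendsto_const_add (a / n)) hX
    fun p hp => by
      rw [← Finset.mul_sum, Finset.sum_add_distrib, hsum]
      exact hle p hp
  refine (iInf₂_le Y ⟨hY, hYsum⟩).trans ?_
  rw [← hsum, ereal_coe_finset_sum]
  refine Finset.sum_le_sum fun i _ => ?_
  refine adjES_le_coe (hg i).1.1.1 (hg i).1.2.2.2 (hY i) fun p hp => ?_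
  rw [← EReal.coe_toReal ((hg i).ne_top (Ioo_subset_Ico_self hp))
    ((hg i).ne_bot (Ioo_subset_Icc_self hp)), ← EReal.coe_add, ES_le_coe_iff hp.2]
  exact hYle i p hp

theorem stmt19_general {n : ℕ} (hn : 0 < n) {g : Fin n → ℝ → EReal} (hg : ∀ i, GESProfile (g i))
    {X : Ω → ℝ} (hX : Integrable X μ) :
    infConv μ (fun i => adjES μ (g i)) X = adjES μ (fun p => ∑ i, g i p) X := by
  refine le_antisymm (EReal.le_of_forall_lt_iff_le.1 fun a ha => ?_) (le_iInf₂ fun Y hY => ?_)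
  · refine infConv_adjES_le_coe hn hg hX fun p hp => ?_
    have hsum : ∑ i, g i p = (∑ i, (g i p).toReal : ℝ) :=
      ereal_sum_eq_coe_sum_toReal (fun i _ => (hg i).ne_bot (Ioo_subset_Icc_self hp))
        fun i _ => (hg i).ne_top (Ioo_subset_Ico_self hp)
    have hES : ES μ X p - ∑ i, g i p ≤ a :=
      (ES_sub_le_adjES (g := fun p => ∑ i, g i p) (Ioo_subset_Icc_self hp)).trans ha.le
    rwa [hsum, EReal.sub_le_iff_le_add (.inl (EReal.coe_ne_bot _)) (.inl (EReal.coe_ne_top _)),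
      ← EReal.coe_add, ES_le_coe_iff hp.2] at hES
  · rw [← funext hY.2]
    exact adjES_sum_le (fun i _ p hp => (hg i).ne_bot hp) fun i _ => hY.1 i

end InfConvolution

/-- For benchmarks `Z_1, …, Z_n ∈ L¹` with ES risk profiles
`g_i(p) = ES_p(Z_i)`, the inf-convolution of the benchmark-adjusted Expected
Shortfalls equals the adjusted Expected Shortfall with profile `g_1 + ⋯ + g_n`. -/
theorem stmt19 (μ : Measure Ω) [IsProbabilityMeasure μ] (hatomless : Atomless μ)
    (n : ℕ) (hn : 0 < n) (Z : Fin n → Ω → ℝ) (hZ : ∀ i, Integrable (Z i) μ)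
    (X : Ω → ℝ) (hX : Integrable X μ) :
    infConv μ (fun i => adjES μ (fun p => ES μ (Z i) p)) X
      = adjES μ (fun p => ∑ i, ES μ (Z i) p) X :=
  stmt19_general hn (fun i => gesProfile_ES (hZ i)) hX
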